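/- There exists a constant C > 0 such that for every R with 0 < R < e^{-1} and every smooth compactly supported f : ℝ² × ℝ² → ℂ, ∬_{ℝ²×ℝ²} ‖K_R(x − y)‖² |f(x,y)|² dx dy ≤ C |log R|² ∬_{ℝ²×ℝ²} ( |f(x,y)|² + ‖∇_x f(x,y)‖² ) dx dy, where ∇_x denotes the gradient in the first ℝ²-variable. (Equivalently, as operators on L²(ℝ⁴), the multiplication operator |∇w_R(x−y)|² is bounded by C|log R|² (1 − Δ_x).) -/

import Mathlib

noncomputable section
open MeasureTheory ENNReal
open scoped RealInnerProductSpace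

/-- The plane `ℝ²`. -/
abbrev E2 : Type := EuclideanSpace ℝ (Fin 2)

/-- The rotation by 90 degrees: `x^⊥ = (-x₂, x₁)`. -/
def perp (x : E2) : E2 := (WithLp.equiv 2 (Fin 2 → ℝ)).symm ![-(x 1), x 0]

/-- The Aharonov–Bohm kernel `K_R(x) = x^⊥ / (max R ‖x‖)²` (with `K_R 0 = 0`,
also when `R = 0`, by the junk-value convention `(0 : ℝ)⁻¹ = 0`). -/
def K (R : ℝ) (x : E2) : E2 := ((max R ‖x‖) ^ 2)⁻¹ • perp x

/-- The standard basis of `ℝ²`. -/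
def e2 (j : Fin 2) : E2 := EuclideanSpace.single j 1

/-- Componentwise convolution of the vector kernel `K_R` with a scalar density. -/
def convKs (R : ℝ) (ρ : E2 → ℝ) (x : E2) : E2 := ∫ y, ρ y • K R (x - y)

/-- Convolution of the vector kernel `K_R` with a vector field, summed over components. -/
def convKv (R : ℝ) (F : E2 → E2) (x : E2) : ℝ := ∫ y, ⟪K R (x - y), F y⟫

/-- The current `J[u] = i(u∇ū - ū∇u) = 2 Im(ū ∇u)`, an `ℝ²`-valued function. -/
def Jf (u : E2 → ℂ) (x : E2) : E2 :=
  (WithLp.equiv 2 (Fin 2 → ℝ)).symm fun j =>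
    2 * ((starRingEnd ℂ) (u x) * fderiv ℝ u x (e2 j)).im

/-- The `H¹` norm `(‖u‖₂² + ‖∇u‖₂²)^{1/2}` (extended-real valued). -/
def H1 (u : E2 → ℂ) : ℝ≥0∞ :=
  (eLpNorm u 2 volume ^ 2 + eLpNorm (fun x => fderiv ℝ u x) 2 volume ^ 2) ^ (1 / 2 : ℝ)

/-- The `H²` norm `(‖u‖₂² + ‖∇u‖₂² + ‖∇²u‖₂²)^{1/2}` (extended-real valued). -/
def H2 (u : E2 → ℂ) : ℝ≥0∞ :=
  (eLpNorm u 2 volume ^ 2 + eLpNorm (fun x => fderiv ℝ u x) 2 volume ^ 2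
    + eLpNorm (fun x => fderiv ℝ (fderiv ℝ u) x) 2 volume ^ 2) ^ (1 / 2 : ℝ)

/-- Logarithmic profile. -/
def psi (R : ℝ) (s : ℝ) : ℝ := (Real.log (R ^ 2 + s) - Real.log (R ^ 2) + 1) / (R ^ 2 + s)

/-- Its derivative. -/
def psi' (R : ℝ) (s : ℝ) : ℝ :=
  (1 - (Real.log (R ^ 2 + s) - Real.log (R ^ 2) + 1)) / (R ^ 2 + s) ^ 2

lemma psi_deriv {R s : ℝ} (hR : 0 < R) (hs : 0 ≤ s) : HasDerivAt (psi R) (psi' R s) s := by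
  have hp : 0 < R ^ 2 + s := by positivity
  have h1 : HasDerivAt (fun s : ℝ => R ^ 2 + s) 1 s := (hasDerivAt_id s).const_add _
  have h2 := (((h1.log hp.ne').sub_const (Real.log (R ^ 2))).add_const 1).div h1 hp.ne'
  refine HasDerivAt.congr_deriv h2 ?_
  unfold psi'
  field_simp

lemma norm_perp (x : E2) : ‖perp x‖ = ‖x‖ := by
  simp [perp, EuclideanSpace.norm_eq, Fin.sum_univ_two, add_comm]

lemma normK_sq {R : ℝ} (x : E2) : ‖K R x‖ ^ 2 = ‖x‖ ^ 2 / (max R ‖x‖) ^ 4 := by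
  unfold K
  rw [norm_smul, norm_perp, norm_inv, norm_pow, Real.norm_eq_abs, mul_pow, inv_pow, ← pow_mul,
    Even.pow_abs (by decide)]
  ring

lemma weight_le {R r : ℝ} (hR : 0 < R) (hr : 0 ≤ r) :
    r ^ 2 / (max R r) ^ 4 ≤ 2 / (R ^ 2 + r ^ 2) := by
  have hm : 0 < max R r := lt_max_of_lt_left hR
  have h1 : R ^ 2 ≤ (max R r) ^ 2 := pow_le_pow_left₀ hR.le (le_max_left _ _) 2
  have h2 : r ^ 2 ≤ (max R r) ^ 2 := pow_le_pow_left₀ hr (le_max_right _ _) 2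
  rw [div_le_div_iff₀ (by positivity) (by positivity)]
  have : r ^ 2 * (R ^ 2 + r ^ 2) ≤ (max R r) ^ 2 * ((max R r) ^ 2 + (max R r) ^ 2) := by gcongr
  nlinarith

/-- The scalar inequality. -/
lemma scalar_ineq {R r : ℝ} (hR : 0 < R) (hR1 : R < Real.exp (-1)) (hr : 0 ≤ r) :
    r ^ 2 / (max R r) ^ 4 / 2 - 5 ≤
      (2 * psi R (r ^ 2) + 2 * r ^ 2 * psi' R (r ^ 2))
        - (psi R (r ^ 2) * r) ^ 2 / (16 * (-Real.log R) ^ 2) := by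
  have hW := weight_le hR hr
  set W := r ^ 2 / (max R r) ^ 4
  have hL : 1 < - Real.log R := by
    have := Real.log_lt_log hR hR1
    rw [Real.log_exp] at this; linarith
  have hR' : R < 1 := hR1.trans (by rw [Real.exp_lt_one_iff]; norm_num)
  set L := -Real.log R with hLdef
  have hlogR : Real.log (R ^ 2) = - 2 * L := by rw [Real.log_pow]; push_cast; ring
  set s := r ^ 2 with hs
  have hs0 : 0 ≤ s := by positivity
  set q := R ^ 2 + s with hq
  have hq0 : 0 < q := by positivity
  have hsq : s ≤ q := by nlinarith [sq_nonneg R]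
  set l := Real.log q - Real.log (R ^ 2) + 1 with hl
  have hl1 : 1 ≤ l := by
    have := Real.log_le_log (by positivity : 0 < R ^ 2) (by linarith : R ^ 2 ≤ q)
    linarith
  have e1 : psi R s = l / q := rfl
  have e2 : psi' R s = (1 - l) / q ^ 2 := rfl
  have hdiv : 2 / q ≤ 2 * psi R s + 2 * s * psi' R s := by
    rw [e1, e2]
    have : 2 * (l / q) + 2 * s * ((1 - l) / q ^ 2) - 2 / q = 2 * R ^ 2 * (l - 1) / q ^ 2 := by
      field_simp
      rw [hq]; ring
    have h3 : 0 ≤ 2 * R ^ 2 * (l - 1) / q ^ 2 := by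
      have : 0 ≤ l - 1 := by linarith
      positivity
    linarith
  have hV : (psi R s * r) ^ 2 ≤ l ^ 2 / q := by
    rw [e1, mul_pow, ← hs, div_pow, div_mul_eq_mul_div, div_le_div_iff₀ (by positivity) hq0]
    nlinarith [mul_le_mul_of_nonneg_left hsq (by positivity : 0 ≤ l ^ 2 * q)]
  have hV2 : (psi R s * r) ^ 2 / (16 * L ^ 2) ≤ l ^ 2 / q / (16 * L ^ 2) := by gcongr
  have hR2 : R ^ 2 < 1 := by nlinarith
  have hlog2 := Real.log_two_lt_d9
  rcases le_or_gt s 1 with h | h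
  · have h4 : l ≤ 4 * L := by
      have := Real.log_le_log hq0 (by linarith : q ≤ 2)
      linarith
    have h5 : l ^ 2 / q / (16 * L ^ 2) ≤ 1 / q := by
      rw [div_div, div_le_div_iff₀ (by positivity) hq0]
      have : l ^ 2 ≤ (4 * L) ^ 2 := by gcongr
      nlinarith
    have : 2 / q = 1 / q + 1 / q := by ring
    linarith
  · have hr1 : 1 < r := by nlinarith
    have h4 : l ≤ 4 * L * (2 * r) := by
      have h6 := Real.log_le_log hq0 (by linarith : q ≤ 2 * s)
      rw [Real.log_mul (by norm_num) (by positivity), hs, Real.log_pow] at h6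
      have h7 := Real.log_le_sub_one_of_pos (by linarith : 0 < r)
      push_cast at h6
      nlinarith
    have h5 : l ^ 2 / q / (16 * L ^ 2) ≤ 4 := by
      rw [div_div, div_le_iff₀ (by positivity)]
      have : l ^ 2 ≤ (4 * L * (2 * r)) ^ 2 := by gcongr
      have h8 : (4 * L * (2 * r)) ^ 2 = 64 * L ^ 2 * s := by rw [hs]; ring
      have h9 : 64 * L ^ 2 * s ≤ 64 * L ^ 2 * q := by gcongr
      nlinarith
    have h6 : 2 / q ≤ 2 := by
      rw [div_le_iff₀ hq0]; linarith
    have : 0 ≤ 2 / q := by positivity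
    linarith

lemma integral_fderiv_zero {g : E2 × E2 → ℝ} (hg : ContDiff ℝ 1 g) (hc : HasCompactSupport g)
    (v : E2 × E2) : ∫ z, fderiv ℝ g z v = 0 := by
  have hi : Integrable (fun z => fderiv ℝ g z v) :=
    ((hg.continuous_fderiv one_ne_zero).clm_apply continuous_const).integrable_of_hasCompactSupport
      (hc.fderiv_apply (𝕜 := ℝ) v)
  have : (volume : Measure (E2 × E2)).IsAddHaarMeasure := by
    rw [Measure.volume_eq_prod]; infer_instance
  have := integral_mul_fderiv_eq_neg_fderiv_mul_of_integrable (𝕜 := ℝ)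
    (μ := (volume : Measure (E2 × E2)))
    (f := fun _ => (1 : ℝ)) (g := g) (v := v) (by simp) (by simpa using hi)
    (by simpa using hg.continuous.integrable_of_hasCompactSupport hc)
    (fun _ _ => differentiableAt_const _)
    (fun x _ => hg.differentiable one_ne_zero x)
  simpa using this

/-- Component of the vector field. -/
def comp (R : ℝ) (f : E2 × E2 → ℂ) (i : Fin 2) (z : E2 × E2) : ℝ :=
  (z.1 - z.2) i * psi R (‖z.1 - z.2‖ ^ 2) * ‖f z‖ ^ 2

lemma comp_contDiff {R : ℝ} (hR : 0 < R) {f : E2 × E2 → ℂ} (hf : ContDiff ℝ (⊤ : ℕ∞) f)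
    (i : Fin 2) : ContDiff ℝ 1 (comp R f i) := by
  have hd : ContDiff ℝ 1 (fun z : E2 × E2 => z.1 - z.2) := contDiff_fst.sub contDiff_snd
  have h1 : ContDiff ℝ 1 (fun z : E2 × E2 => (z.1 - z.2) i) :=
    (EuclideanSpace.proj (𝕜 := ℝ) i).contDiff.comp hd
  have h2 : ContDiff ℝ 1 (fun z : E2 × E2 => ‖z.1 - z.2‖ ^ 2) := hd.norm_sq ℝ
  have h3 : ContDiff ℝ 1 (fun z : E2 × E2 => ‖f z‖ ^ 2) := (hf.of_le (by norm_cast)).norm_sq ℝ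
  have hne : ∀ z : E2 × E2, R ^ 2 + ‖z.1 - z.2‖ ^ 2 ≠ 0 := fun z => by positivity
  have h4 : ContDiff ℝ 1 (fun z : E2 × E2 => psi R (‖z.1 - z.2‖ ^ 2)) := by
    unfold psi
    exact ((((contDiff_const.add h2).log hne).sub contDiff_const).add contDiff_const).div
      (contDiff_const.add h2) hne
  exact (h1.mul h4).mul h3

lemma comp_compact {R : ℝ} {f : E2 × E2 → ℂ} (hf : HasCompactSupport f)
    (i : Fin 2) : HasCompactSupport (comp R f i) := by
  refine hf.mono' ?_
  intro z hz
  apply subset_tsupport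
  intro h0
  apply hz
  simp [comp, h0]

lemma comp_fderiv {R : ℝ} (hR : 0 < R) {f : E2 × E2 → ℂ} (hf : ContDiff ℝ (⊤ : ℕ∞) f)
    (i : Fin 2) (z : E2 × E2) : fderiv ℝ (comp R f i) z (e2 i, 0) =
      psi R (‖z.1 - z.2‖ ^ 2) * ‖f z‖ ^ 2
      + 2 * ((z.1 - z.2) i) ^ 2 * psi' R (‖z.1 - z.2‖ ^ 2) * ‖f z‖ ^ 2
      + (z.1 - z.2) i * psi R (‖z.1 - z.2‖ ^ 2) * (2 * ⟪f z, fderiv ℝ f z (e2 i, 0)⟫) := by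
  have hd : HasFDerivAt (fun z : E2 × E2 => z.1 - z.2)
      (ContinuousLinearMap.fst ℝ E2 E2 - ContinuousLinearMap.snd ℝ E2 E2) z :=
    hasFDerivAt_fst.sub hasFDerivAt_snd
  have h1 := (EuclideanSpace.proj i : E2 →L[ℝ] ℝ).hasFDerivAt.comp z hd
  have h2 := (psi_deriv hR (by positivity : 0 ≤ ‖z.1 - z.2‖ ^ 2)).comp_hasFDerivAt z hd.norm_sq
  have h3 := (hf.differentiable (by simp) z).hasFDerivAt.norm_sq
  have h4 := ((h1.mul h2).mul h3).fderiv
  have h5 : fderiv ℝ (comp R f i) z = _ := h4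
  rw [h5]
  simp [e2, EuclideanSpace.inner_single_right]
  ring

lemma fderiv_partial {f : E2 × E2 → ℂ} (hf : ContDiff ℝ (⊤ : ℕ∞) f) (z : E2 × E2) :
    fderiv ℝ (fun x => f (x, z.2)) z.1 =
      (fderiv ℝ f z).comp (ContinuousLinearMap.inl ℝ E2 E2) := by
  have h := (hf.differentiable (by simp) z).hasFDerivAt
  exact (HasFDerivAt.comp z.1 (g := f) (f := fun x => (x, z.2)) h
    (hasFDerivAt_prodMk_left z.1 z.2)).fderiv

lemma div_eq {R : ℝ} (hR : 0 < R) {f : E2 × E2 → ℂ} (hf : ContDiff ℝ (⊤ : ℕ∞) f)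
    (z : E2 × E2) : fderiv ℝ (comp R f 0) z (e2 0, 0) + fderiv ℝ (comp R f 1) z (e2 1, 0) =
      (2 * psi R (‖z.1 - z.2‖ ^ 2) + 2 * ‖z.1 - z.2‖ ^ 2 * psi' R (‖z.1 - z.2‖ ^ 2)) * ‖f z‖ ^ 2
      + psi R (‖z.1 - z.2‖ ^ 2) *
        (2 * ⟪f z, fderiv ℝ (fun x => f (x, z.2)) z.1 (z.1 - z.2)⟫) := by
  rw [comp_fderiv hR hf, comp_fderiv hR hf, fderiv_partial hf]
  generalize psi R (‖z.1 - z.2‖ ^ 2) = p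
  generalize psi' R (‖z.1 - z.2‖ ^ 2) = p'
  generalize z.1 - z.2 = x
  have hx : x = x 0 • e2 0 + x 1 • e2 1 := by
    ext j; fin_cases j <;> simp [e2]
  have hn : ‖x‖ ^ 2 = x 0 ^ 2 + x 1 ^ 2 := by
    rw [EuclideanSpace.norm_sq_eq]; simp [Fin.sum_univ_two]
  have hin : ⟪f z, (fderiv ℝ f z).comp (ContinuousLinearMap.inl ℝ E2 E2) x⟫ =
      x 0 * ⟪f z, fderiv ℝ f z (e2 0, 0)⟫ + x 1 * ⟪f z, fderiv ℝ f z (e2 1, 0)⟫ := by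
    conv_lhs => rw [hx]
    rw [map_add, map_smul, map_smul, inner_add_right, real_inner_smul_right,
      real_inner_smul_right]
    rfl
  rw [hin, hn]
  ring

lemma pointwise {R : ℝ} (hR : 0 < R) (hR1 : R < Real.exp (-1)) {f : E2 × E2 → ℂ}
    (hf : ContDiff ℝ (⊤ : ℕ∞) f) (z : E2 × E2) :
    ‖K R (z.1 - z.2)‖ ^ 2 * ‖f z‖ ^ 2 ≤
      32 * (-Real.log R) ^ 2 * (‖f z‖ ^ 2 + ‖fderiv ℝ (fun x => f (x, z.2)) z.1‖ ^ 2)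
      + 2 * (fderiv ℝ (comp R f 0) z (e2 0, 0) + fderiv ℝ (comp R f 1) z (e2 1, 0)) := by
  rw [div_eq hR hf, normK_sq]
  have hS := scalar_ineq hR hR1 (norm_nonneg (z.1 - z.2))
  have hL : 1 < - Real.log R := by
    have := Real.log_lt_log hR hR1
    rw [Real.log_exp] at this; linarith
  generalize fderiv ℝ (fun x => f (x, z.2)) z.1 = D
  generalize z.1 - z.2 = x at *
  generalize -Real.log R = L at *
  generalize psi R (‖x‖ ^ 2) = p at *
  generalize 2 * p + 2 * ‖x‖ ^ 2 * psi' R (‖x‖ ^ 2) = q at *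
  generalize ‖x‖ ^ 2 / (max R ‖x‖) ^ 4 = W at *
  have h1 : |⟪f z, D x⟫| ≤ ‖f z‖ * (‖D‖ * ‖x‖) :=
    (abs_real_inner_le_norm _ _).trans (by gcongr; exact D.le_opNorm x)
  have h2 : |p * ⟪f z, D x⟫| ≤ |p| * (‖f z‖ * (‖D‖ * ‖x‖)) := by
    rw [abs_mul]; gcongr
  have h3 := (abs_le.1 h2).1
  have h4 : 2 * (|p| * (‖f z‖ * (‖D‖ * ‖x‖))) ≤
      (p * ‖x‖) ^ 2 / (16 * L ^ 2) * ‖f z‖ ^ 2 + 16 * L ^ 2 * ‖D‖ ^ 2 := by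
    have hL0 : L ≠ 0 := by linarith
    have := sq_nonneg (|p| * ‖x‖ * ‖f z‖ / (4 * L) - 4 * L * ‖D‖)
    have e : (|p| * ‖x‖ * ‖f z‖ / (4 * L) - 4 * L * ‖D‖) ^ 2 =
      (|p| ^ 2 * ‖x‖ ^ 2) / (16 * L ^ 2) * ‖f z‖ ^ 2 + 16 * L ^ 2 * ‖D‖ ^ 2
        - 2 * (|p| * (‖f z‖ * (‖D‖ * ‖x‖))) := by
      field_simp
      ring
    rw [e, sq_abs] at this
    rw [mul_pow]
    linarith
  have h5 := mul_le_mul_of_nonneg_right hS (sq_nonneg ‖f z‖)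
  have h6 : 10 * ‖f z‖ ^ 2 ≤ 32 * L ^ 2 * ‖f z‖ ^ 2 := by
    gcongr; nlinarith
  nlinarith

/-- Lemma 2.6 (singular two-body term), quadratic-form version: there is `C > 0` such
that for all `0 < R < e⁻¹` and all smooth compactly supported `f : ℝ²×ℝ² → ℂ`,
`∬ ‖K_R(x−y)‖² |f(x,y)|² ≤ C |log R|² ∬ (|f(x,y)|² + ‖∇ₓf(x,y)‖²)`. -/
theorem statement6 :
    ∃ C : ℝ, 0 < C ∧ ∀ R : ℝ, 0 < R → R < Real.exp (-1) →
      ∀ f : E2 × E2 → ℂ, ContDiff ℝ (⊤ : ℕ∞) f → HasCompactSupport f →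
        ∫ z : E2 × E2, ‖K R (z.1 - z.2)‖ ^ 2 * ‖f z‖ ^ 2
          ≤ C * (-Real.log R) ^ 2 *
              ∫ z : E2 × E2, (‖f z‖ ^ 2 + ‖fderiv ℝ (fun x => f (x, z.2)) z.1‖ ^ 2) := by
  refine ⟨32, by norm_num, fun R hR hR1 f hf hc => ?_⟩
  have hK : Continuous (fun z : E2 × E2 => ‖K R (z.1 - z.2)‖ ^ 2) := by
    simp only [normK_sq]
    refine Continuous.div (by fun_prop) (by fun_prop) fun z => ?_
    have : 0 < max R ‖z.1 - z.2‖ := lt_max_of_lt_left hR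
    positivity
  have hc2 : HasCompactSupport (fun z => ‖f z‖ ^ 2) :=
    hc.comp_left (g := fun w : ℂ => ‖w‖ ^ 2) (by simp)
  have hfc := hf.continuous
  have i1 : Integrable (fun z : E2 × E2 => ‖K R (z.1 - z.2)‖ ^ 2 * ‖f z‖ ^ 2) :=
    (hK.mul (by fun_prop)).integrable_of_hasCompactSupport hc2.mul_left
  have i2 : Integrable (fun z : E2 × E2 => ‖f z‖ ^ 2) :=
    Continuous.integrable_of_hasCompactSupport (by fun_prop) hc2
  have i3 : Integrable (fun z : E2 × E2 => ‖fderiv ℝ (fun x => f (x, z.2)) z.1‖ ^ 2) := by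
    simp only [fderiv_partial hf]
    have hd := hf.continuous_fderiv (by simp)
    refine Continuous.integrable_of_hasCompactSupport ?_ ?_
    · exact ((hd.clm_comp continuous_const).norm).pow 2
    · exact (hc.fderiv (𝕜 := ℝ)).comp_left
        (g := fun D : E2 × E2 →L[ℝ] ℂ => ‖D.comp (ContinuousLinearMap.inl ℝ E2 E2)‖ ^ 2)
        (by simp)
  have i4 : ∀ i, Integrable (fun z => fderiv ℝ (comp R f i) z (e2 i, 0)) := fun i =>
    (((comp_contDiff hR hf i).continuous_fderiv one_ne_zero).clm_apply
      continuous_const).integrable_of_hasCompactSupport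
      ((comp_compact hc i).fderiv_apply (𝕜 := ℝ) _)
  have key := integral_mono i1 (((i2.add i3).const_mul (32 * (-Real.log R) ^ 2)).add
    (((i4 0).add (i4 1)).const_mul 2)) (fun z => pointwise hR hR1 hf z)
  refine key.trans (le_of_eq ?_)
  simp only [Pi.add_apply]
  have := integral_add ((i2.add i3).const_mul (32 * (-Real.log R) ^ 2))
    (((i4 0).add (i4 1)).const_mul 2)
  simp only [Pi.add_apply] at this
  rw [this, integral_const_mul, integral_const_mul, integral_add (i4 0) (i4 1),
    integral_fderiv_zero (comp_contDiff hR hf 0) (comp_compact hc 0),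
    integral_fderiv_zero (comp_contDiff hR hf 1) (comp_compact hc 1)]
  simp
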